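/- Let n ≥ 2 and G = ℝⁿ \ {0}. For every α ∈ (0, π] and all x, y ∈ G with ∠(x, 0, y) ≤ α, one has k_G(x,y) ≤ (α / log(1 + 2 sin(α/2))) · j_G(x,y) ≤ (1 + α) · j_G(x,y). -/

import Mathlib

open Set Metric

/-- The Euclidean distance from a point to the boundary of `G`. -/
noncomputable def bdist {n : ℕ} (G : Set (EuclideanSpace ℝ (Fin n)))
    (x : EuclideanSpace ℝ (Fin n)) : ℝ :=
  Metric.infDist x (frontier G)

/-- The quasihyperbolic length of a path `γ` (parametrized on `[0,1]`) in `G`. -/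
noncomputable def qhLength {n : ℕ} (G : Set (EuclideanSpace ℝ (Fin n)))
    (γ : ℝ → EuclideanSpace ℝ (Fin n)) : ℝ :=
  ∫ t in (0:ℝ)..1, ‖deriv γ t‖ / bdist G (γ t)

/-- The quasihyperbolic metric of `G`: the infimum of quasihyperbolic lengths of
paths joining `x` and `y` inside `G`. -/
noncomputable def qhDist {n : ℕ} (G : Set (EuclideanSpace ℝ (Fin n)))
    (x y : EuclideanSpace ℝ (Fin n)) : ℝ :=
  ⨅ γ : {γ : ℝ → EuclideanSpace ℝ (Fin n) // γ 0 = x ∧ γ 1 = y ∧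
      (∀ t ∈ Set.Icc (0:ℝ) 1, γ t ∈ G) ∧ ContDiffOn ℝ 1 γ (Set.Icc 0 1)},
    qhLength G γ.1

/-- The distance ratio metric of `G`. -/
noncomputable def jDist {n : ℕ} (G : Set (EuclideanSpace ℝ (Fin n)))
    (x y : EuclideanSpace ℝ (Fin n)) : ℝ :=
  Real.log (1 + dist x y / min (bdist G x) (bdist G y))

/-!
Along the logarithmic spiral joining `x` to `y` the quasihyperbolic density is constant, so that
`k(x, y) ≤ √(θ² + L²)` with `θ = ∠(x, 0, y)` and `L = log (‖y‖ / ‖x‖)`. If `‖x‖ ≤ ‖y‖`, the law of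
cosines gives `j(x, y) = log (1 + √((e^L - 1)² + σ² e^L))` with `σ = 2 sin (θ / 2)`. For
`c = log (1 + 2 sin (α / 2)) / α ≤ 1` the inequality `c √(θ² + L²) ≤ j` holds at `L = 0` because
`sin` and `log` are concave, and it persists for `L > 0` because the right side grows faster.
-/

section ScalarInequalities

open Real

lemma mul_log_one_add_le_log_one_add_mul {t s : ℝ} (hs : -1 < s) (ht₀ : 0 ≤ t) (ht₁ : t ≤ 1) :
    t * log (1 + s) ≤ log (1 + t * s) := by
  have hs' : 0 < 1 + s := by linarith
  rw [← log_rpow hs']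
  exact log_le_log (rpow_pos_of_pos hs' t) (rpow_one_add_le_one_add_mul_self hs.le ht₀ ht₁)

lemma mul_sin_le_sin_mul {t β : ℝ} (hβ₀ : 0 ≤ β) (hβπ : β ≤ π) (ht₀ : 0 ≤ t) (ht₁ : t ≤ 1) :
    t * sin β ≤ sin (t * β) := by
  simpa only [smul_eq_mul, sin_zero, mul_zero, zero_add] using
    strictConcaveOn_sin_Icc.concaveOn.2 ⟨le_rfl, pi_nonneg⟩ ⟨hβ₀, hβπ⟩
      (sub_nonneg.2 ht₁) ht₀ (sub_add_cancel 1 t)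

lemma mul_log_one_add_two_mul_sin_half_le {t α : ℝ} (hα₀ : 0 ≤ α) (hα : α ≤ 2 * π)
    (ht₀ : 0 ≤ t) (ht₁ : t ≤ 1) :
    t * log (1 + 2 * sin (α / 2)) ≤ log (1 + 2 * sin (t * α / 2)) := by
  have hsin : 0 ≤ sin (α / 2) := sin_nonneg_of_nonneg_of_le_pi (by linarith) (by linarith)
  have hconcave : t * sin (α / 2) ≤ sin (t * α / 2) := by
    rw [mul_div_assoc]
    exact mul_sin_le_sin_mul (by linarith) (by linarith) ht₀ ht₁
  calc t * log (1 + 2 * sin (α / 2)) ≤ log (1 + t * (2 * sin (α / 2))) :=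
        mul_log_one_add_le_log_one_add_mul (by linarith) ht₀ ht₁
    _ ≤ log (1 + 2 * sin (t * α / 2)) := log_le_log (by positivity) (by linarith)

lemma two_mul_sin_half_le {θ : ℝ} (hθ : 0 ≤ θ) : 2 * sin (θ / 2) ≤ θ := by
  linarith [sin_le (show 0 ≤ θ / 2 by positivity)]

lemma log_one_add_two_mul_sin_half_pos {α : ℝ} (hα₀ : 0 < α) (hα : α < 2 * π) :
    0 < log (1 + 2 * sin (α / 2)) := by
  have := sin_pos_of_pos_of_lt_pi (half_pos hα₀) (by linarith)
  exact log_pos (by linarith)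

lemma log_one_add_two_mul_sin_half_le {α : ℝ} (hα₀ : 0 ≤ α) (hα : α ≤ 2 * π) :
    log (1 + 2 * sin (α / 2)) ≤ α := by
  have hsin : 0 ≤ sin (α / 2) := sin_nonneg_of_nonneg_of_le_pi (by linarith) (by linarith)
  linarith [log_le_sub_one_of_pos (show 0 < 1 + 2 * sin (α / 2) by linarith),
    two_mul_sin_half_le hα₀]

lemma le_sin_mul_one_add {β : ℝ} (hβ₀ : 0 ≤ β) (hβ : β ≤ π / 2) : β ≤ sin β * (1 + β) := by
  rcases le_total β 1 with hβ₁ | hβ₁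
  · calc β ≤ (β - β ^ 3 / 6) * (1 + β) := by
          nlinarith [mul_nonneg (pow_nonneg hβ₀ 2) (sub_nonneg.2 hβ₁),
            mul_nonneg (pow_nonneg hβ₀ 3) (sub_nonneg.2 hβ₁)]
      _ ≤ sin β * (1 + β) := by
          gcongr
          exact sin_ge_sub_cube hβ₀
  · have htwo_div_pi : 1 / 2 ≤ 2 / π := by
      rw [div_le_div_iff₀ two_pos pi_pos]
      linarith [pi_le_four]
    have hjordan : β / 2 ≤ sin β := by
      linarith [mul_le_sin hβ₀ hβ, mul_le_mul_of_nonneg_right htwo_div_pi hβ₀]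
    nlinarith

lemma le_one_add_mul_log_one_add_two_mul_sin_half {α : ℝ} (hα₀ : 0 ≤ α) (hα : α ≤ π) :
    α ≤ (1 + α) * log (1 + 2 * sin (α / 2)) := by
  have hsin : 0 ≤ sin (α / 2) := sin_nonneg_of_nonneg_of_le_pi (by linarith) (by linarith)
  have hα_le : α / 2 ≤ sin (α / 2) * (1 + α / 2) := le_sin_mul_one_add (by linarith) (by linarith)
  calc α ≤ (1 + α) * (2 * (2 * sin (α / 2)) / (2 * sin (α / 2) + 2)) := by
        rw [← mul_div_assoc, le_div_iff₀ (by linarith)]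
        linarith
    _ ≤ (1 + α) * log (1 + 2 * sin (α / 2)) := by
        gcongr
        exact le_log_one_add_of_nonneg (by linarith)

lemma sq_mul_exp_le_exp_sub_one_sq (L : ℝ) : L ^ 2 * exp L ≤ (exp L - 1) ^ 2 := by
  have hsplit : exp L = exp (L / 2) ^ 2 := by rw [← exp_nat_mul]; ring_nf
  have hsub : 2 * sinh (L / 2) * exp (L / 2) = exp L - 1 := by
    rw [sinh_eq, hsplit, exp_neg]
    field_simp
  have hsinh : (L / 2) ^ 2 ≤ sinh (L / 2) ^ 2 := by
    rw [sq_le_sq, abs_sinh]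
    exact self_le_sinh_iff.2 (abs_nonneg _)
  calc L ^ 2 * exp L = 4 * (L / 2) ^ 2 * exp (L / 2) ^ 2 := by rw [hsplit]; ring
    _ ≤ 4 * sinh (L / 2) ^ 2 * exp (L / 2) ^ 2 := by gcongr
    _ = (exp L - 1) ^ 2 := by rw [← hsub]; ring

end ScalarInequalities

section PolarDist

open Real

/-- The Euclidean distance between two points of norms `1` and `exp L` whose radial projections
to the unit sphere are at distance `σ`: the form in which the law of cosines enters `jDist`. -/
noncomputable def polarDist (σ L : ℝ) : ℝ :=
  √((exp L - 1) ^ 2 + σ ^ 2 * exp L)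

lemma polarDist_nonneg (σ L : ℝ) : 0 ≤ polarDist σ L :=
  sqrt_nonneg _

lemma sq_polarDist (σ L : ℝ) : polarDist σ L ^ 2 = (exp L - 1) ^ 2 + σ ^ 2 * exp L :=
  sq_sqrt (by positivity)

lemma polarDist_zero_right {σ : ℝ} (hσ : 0 ≤ σ) : polarDist σ 0 = σ := by
  simp [polarDist, sqrt_sq hσ]

lemma polarDist_pos (σ : ℝ) {L : ℝ} (hL : L ≠ 0) : 0 < polarDist σ L := by
  have : exp L - 1 ≠ 0 := sub_ne_zero.2 (exp_eq_one_iff L |>.not.2 hL)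
  exact sqrt_pos.2 (by positivity)

lemma continuous_polarDist (σ : ℝ) : Continuous (polarDist σ) := by
  unfold polarDist
  fun_prop

lemma hasDerivAt_polarDist (σ : ℝ) {L : ℝ} (hL : L ≠ 0) :
    HasDerivAt (polarDist σ)
      ((polarDist σ L ^ 2 + exp L ^ 2 - 1) / (2 * polarDist σ L)) L := by
  have hsq : HasDerivAt (fun L ↦ (exp L - 1) ^ 2 + σ ^ 2 * exp L)
      (polarDist σ L ^ 2 + exp L ^ 2 - 1) L := by
    refine ((((hasDerivAt_exp L).sub_const 1).pow 2).add
      ((hasDerivAt_exp L).const_mul (σ ^ 2))).congr_deriv ?_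
    rw [sq_polarDist]
    push_cast
    ring
  exact hsq.sqrt (sqrt_pos.1 (polarDist_pos σ hL)).ne'

lemma div_sqrt_sq_add_sq_le_exp_sub_one_div_polarDist {σ θ L : ℝ} (hσ : 0 ≤ σ) (hσθ : σ ≤ θ)
    (hL : 0 < L) : L / √(θ ^ 2 + L ^ 2) ≤ (exp L - 1) / polarDist σ L := by
  have hexp : 0 ≤ exp L - 1 := sub_nonneg.2 (one_le_exp hL.le)
  rw [div_le_div_iff₀ (sqrt_pos.2 (by positivity)) (polarDist_pos σ hL.ne')]
  refine le_of_sq_le_sq ?_ (by positivity)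
  rw [mul_pow, mul_pow, sq_polarDist, sq_sqrt (by positivity)]
  calc L ^ 2 * ((exp L - 1) ^ 2 + σ ^ 2 * exp L)
      = (exp L - 1) ^ 2 * L ^ 2 + σ ^ 2 * (L ^ 2 * exp L) := by ring
    _ ≤ (exp L - 1) ^ 2 * L ^ 2 + θ ^ 2 * (exp L - 1) ^ 2 := by
        gcongr
        exact sq_mul_exp_le_exp_sub_one_sq L
    _ = (exp L - 1) ^ 2 * (θ ^ 2 + L ^ 2) := by ring

lemma exp_sub_one_div_polarDist_le (σ : ℝ) {L : ℝ} (hL : L ≠ 0) :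
    (exp L - 1) / polarDist σ L ≤
      (polarDist σ L ^ 2 + exp L ^ 2 - 1) / (2 * polarDist σ L) / (1 + polarDist σ L) := by
  have hD := polarDist_pos σ hL
  rw [div_div, div_le_div_iff₀ hD (by positivity)]
  linear_combination mul_nonneg hD.le (sq_nonneg (polarDist σ L - (exp L - 1)))

lemma monotoneOn_log_one_add_polarDist_sub {c σ θ : ℝ} (hc : c ≤ 1) (hσ : 0 ≤ σ) (hσθ : σ ≤ θ) :
    MonotoneOn (fun L ↦ log (1 + polarDist σ L) - c * √(θ ^ 2 + L ^ 2)) (Ici 0) := by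
  have hpos (L : ℝ) : 1 + polarDist σ L ≠ 0 := by linarith [polarDist_nonneg σ L]
  refine monotoneOn_of_hasDerivWithinAt_nonneg (convex_Ici 0)
    (f' := fun L ↦ (polarDist σ L ^ 2 + exp L ^ 2 - 1) / (2 * polarDist σ L) /
      (1 + polarDist σ L) - c * (L / √(θ ^ 2 + L ^ 2))) ?_ ?_ ?_
  · exact (((continuous_polarDist σ).const_add 1).log hpos |>.sub (by fun_prop)).continuousOn
  all_goals
    intro L hL
    rw [interior_Ici, mem_Ioi] at hL
  · have hsqrt : HasDerivAt (fun L ↦ √(θ ^ 2 + L ^ 2)) (L / √(θ ^ 2 + L ^ 2)) L := by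
      refine (((hasDerivAt_pow 2 L).const_add (θ ^ 2)).sqrt (by positivity)).congr_deriv ?_
      rw [mul_div_mul_comm]
      norm_num
    exact ((((hasDerivAt_polarDist σ hL.ne').const_add 1).log (hpos L)).sub
      (hsqrt.const_mul c)).hasDerivWithinAt
  · have hratio : 0 ≤ L / √(θ ^ 2 + L ^ 2) := by positivity
    rw [sub_nonneg]
    calc c * (L / √(θ ^ 2 + L ^ 2)) ≤ L / √(θ ^ 2 + L ^ 2) := mul_le_of_le_one_left hratio hc
      _ ≤ (exp L - 1) / polarDist σ L :=
        div_sqrt_sq_add_sq_le_exp_sub_one_div_polarDist hσ hσθ hL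
      _ ≤ _ := exp_sub_one_div_polarDist_le σ hL.ne'

lemma mul_sqrt_sq_add_sq_le_log_one_add_polarDist {c σ θ L : ℝ} (hc : c ≤ 1) (hσ : 0 ≤ σ)
    (hσθ : σ ≤ θ) (hcθ : c * θ ≤ log (1 + σ)) (hL : 0 ≤ L) :
    c * √(θ ^ 2 + L ^ 2) ≤ log (1 + polarDist σ L) := by
  have hmono := monotoneOn_log_one_add_polarDist_sub hc hσ hσθ self_mem_Ici hL hL
  have hθ : √(θ ^ 2 + 0 ^ 2) = θ := by
    rw [zero_pow two_ne_zero, add_zero, sqrt_sq (hσ.trans hσθ)]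
  simp only [polarDist_zero_right hσ, hθ] at hmono
  linarith

end PolarDist

section InnerProductSpace

open Real InnerProductGeometry

variable {E : Type*} [NormedAddCommGroup E] [InnerProductSpace ℝ E]

lemma norm_sub_sq_eq_norm_sub_norm_sq_add (x y : E) :
    ‖x - y‖ ^ 2 = (‖x‖ - ‖y‖) ^ 2 + (2 * sin (angle x y / 2)) ^ 2 * (‖x‖ * ‖y‖) := by
  have hcos : cos (angle x y) = 1 - 2 * sin (angle x y / 2) ^ 2 := by
    rw [sin_sq_eq_half_sub, mul_div_cancel₀ _ two_ne_zero]
    ring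
  rw [norm_sub_sq_real, ← cos_angle_mul_norm_mul_norm, hcos]
  ring

lemma dist_div_norm_eq_polarDist {x y : E} (hx : x ≠ 0) (hy : y ≠ 0) :
    dist x y / ‖x‖ = polarDist (2 * sin (angle x y / 2)) (log (‖y‖ / ‖x‖)) := by
  rw [← sq_eq_sq₀ (by positivity) (polarDist_nonneg _ _), sq_polarDist, exp_log (by positivity),
    div_pow, dist_eq_norm, norm_sub_sq_eq_norm_sub_norm_sq_add]
  field_simp
  ring

lemma mul_sqrt_angle_sq_add_log_sq_le {x y : E} {c : ℝ} (hx : x ≠ 0) (hy : y ≠ 0) (hc : c ≤ 1)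
    (hcθ : c * angle x y ≤ log (1 + 2 * sin (angle x y / 2))) :
    c * √(angle x y ^ 2 + log (‖y‖ / ‖x‖) ^ 2) ≤ log (1 + dist x y / min ‖x‖ ‖y‖) := by
  wlog hxy : ‖x‖ ≤ ‖y‖ generalizing x y
  · rw [angle_comm] at hcθ
    rw [angle_comm, dist_comm, min_comm, ← inv_div, log_inv, neg_sq]
    exact this hy hx hcθ (le_of_not_ge hxy)
  have hL : 0 ≤ log (‖y‖ / ‖x‖) := log_nonneg ((one_le_div (norm_pos_iff.2 hx)).2 hxy)
  have hσ : 0 ≤ 2 * sin (angle x y / 2) := by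
    have := sin_nonneg_of_nonneg_of_le_pi (x := angle x y / 2) (by linarith [angle_nonneg x y])
      (by linarith [angle_le_pi x y, pi_pos])
    positivity
  rw [min_eq_left hxy, dist_div_norm_eq_polarDist hx hy]
  exact mul_sqrt_sq_add_sq_le_log_one_add_polarDist hc hσ
    (two_mul_sin_half_le (angle_nonneg x y)) hcθ hL

lemma exists_norm_eq_one_norm_smul_eq {V : Type*} [NormedAddCommGroup V] [NormedSpace ℝ V]
    [Nontrivial V] (z : V) : ∃ e : V, ‖e‖ = 1 ∧ ‖z‖ • e = z := by
  rcases eq_or_ne z 0 with rfl | hz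
  · obtain ⟨e, he⟩ := exists_norm_eq V zero_le_one
    exact ⟨e, he, by simp⟩
  · exact ⟨‖z‖⁻¹ • z, norm_smul_inv_norm hz, smul_inv_smul₀ (norm_ne_zero_iff.2 hz) z⟩

lemma nontrivial_orthogonal_span_singleton (hE : 1 < Module.rank ℝ E) (x : E) :
    Nontrivial (ℝ ∙ x)ᗮ := by
  rw [Submodule.nontrivial_iff_ne_bot, Ne, Submodule.orthogonal_eq_bot_iff]
  intro htop
  have : Module.rank ℝ (ℝ ∙ x) ≤ 1 := by simpa using rank_span_le (R := ℝ) ({x} : Set E)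
  rw [htop, rank_top] at this
  exact this.not_gt hE

lemma exists_orthogonal_eq_cos_smul_add_sin_smul (hE : 1 < Module.rank ℝ E) (x y : E) :
    ∃ w : E, ‖w‖ = ‖x‖ ∧ inner ℝ x w = 0 ∧
      ‖x‖ • y = ‖y‖ • (cos (angle x y) • x + sin (angle x y) • w) := by
  have := nontrivial_orthogonal_span_singleton hE x
  set θ := angle x y
  set z := ‖x‖ • y - (‖y‖ * cos θ) • x with hz
  have hinner : inner ℝ x y = cos θ * (‖x‖ * ‖y‖) := (cos_angle_mul_norm_mul_norm x y).symm
  have hxz : inner ℝ x z = 0 := by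
    rw [hz, inner_sub_right, real_inner_smul_right, real_inner_smul_right, hinner,
      real_inner_self_eq_norm_sq]
    ring
  have hz_norm : ‖z‖ = ‖x‖ * ‖y‖ * sin θ := by
    rw [← sq_eq_sq₀ (norm_nonneg _) (mul_nonneg (by positivity) (sin_angle_nonneg x y)), mul_pow,
      sin_sq, hz, norm_sub_sq_real, real_inner_smul_left, real_inner_smul_right, real_inner_comm,
      hinner, norm_smul, norm_smul, norm_mul, norm_norm, norm_norm, mul_pow, mul_pow, mul_pow,
      norm_eq_abs (cos θ), sq_abs]
    ring
  obtain ⟨⟨e, he⟩, he_norm, hze⟩ := exists_norm_eq_one_norm_smul_eq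
    (⟨z, Submodule.mem_orthogonal_singleton_iff_inner_right.2 hxz⟩ : (ℝ ∙ x)ᗮ)
  replace he_norm : ‖e‖ = 1 := he_norm
  replace hze : ‖z‖ • e = z := congrArg Subtype.val hze
  refine ⟨‖x‖ • e, ?_, ?_, ?_⟩
  · rw [norm_smul, norm_norm, he_norm, mul_one]
  · rw [real_inner_smul_right, Submodule.mem_orthogonal_singleton_iff_inner_right.1 he, mul_zero]
  · rw [← sub_eq_zero] at hze ⊢
    rw [← neg_eq_zero, ← hze, hz_norm, hz]
    module

lemma norm_smul_add_smul_of_inner_eq_zero {x w : E} (hw : ‖w‖ = ‖x‖) (hxw : inner ℝ x w = 0)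
    (p q : ℝ) : ‖p • x + q • w‖ = √(p ^ 2 + q ^ 2) * ‖x‖ := by
  rw [← sq_eq_sq₀ (norm_nonneg _) (by positivity), mul_pow, sq_sqrt (by positivity),
    norm_add_sq_real, real_inner_smul_left, real_inner_smul_right, hxw, norm_smul, norm_smul, hw,
    mul_pow, mul_pow, norm_eq_abs, norm_eq_abs, sq_abs, sq_abs]
  ring

/-- The logarithmic spiral through `x` in the plane of `x` and `w`. If `w` is orthogonal to `x` and
of the same norm, it turns by the angle `θ` and scales by `exp L` in unit time. -/
noncomputable def logSpiral (x w : E) (θ L t : ℝ) : E :=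
  exp (t * L) • (cos (t * θ) • x + sin (t * θ) • w)

lemma logSpiral_zero (x w : E) (θ L : ℝ) : logSpiral x w θ L 0 = x := by
  simp [logSpiral]

lemma logSpiral_one_eq {x y w : E} (hx : x ≠ 0) (hy : y ≠ 0)
    (hw : ‖x‖ • y = ‖y‖ • (cos (angle x y) • x + sin (angle x y) • w)) :
    logSpiral x w (angle x y) (log (‖y‖ / ‖x‖)) 1 = y := by
  have hx' : 0 < ‖x‖ := norm_pos_iff.2 hx
  have hy' : 0 < ‖y‖ := norm_pos_iff.2 hy
  rw [logSpiral, one_mul, one_mul, exp_log (div_pos hy' hx'), div_eq_inv_mul, mul_smul, ← hw,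
    inv_smul_smul₀ hx'.ne']

lemma contDiff_logSpiral (x w : E) (θ L : ℝ) {n : WithTop ℕ∞} :
    ContDiff ℝ n (logSpiral x w θ L) := by
  unfold logSpiral
  fun_prop

lemma hasDerivAt_logSpiral (x w : E) (θ L t : ℝ) :
    HasDerivAt (logSpiral x w θ L)
      (exp (t * L) • ((L * cos (t * θ) - θ * sin (t * θ)) • x +
        (L * sin (t * θ) + θ * cos (t * θ)) • w)) t := by
  have hθ : HasDerivAt (fun t ↦ t * θ) θ t := hasDerivAt_mul_const θ
  refine ((hasDerivAt_mul_const L).exp.smul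
    ((hθ.cos.smul_const x).fun_add (hθ.sin.smul_const w))).congr_deriv ?_
  module

lemma norm_logSpiral {x w : E} (hw : ‖w‖ = ‖x‖) (hxw : inner ℝ x w = 0) (θ L t : ℝ) :
    ‖logSpiral x w θ L t‖ = exp (t * L) * ‖x‖ := by
  rw [logSpiral, norm_smul, norm_of_nonneg (exp_nonneg _),
    norm_smul_add_smul_of_inner_eq_zero hw hxw, cos_sq_add_sin_sq, sqrt_one, one_mul]

lemma norm_deriv_logSpiral {x w : E} (hw : ‖w‖ = ‖x‖) (hxw : inner ℝ x w = 0) (θ L t : ℝ) :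
    ‖deriv (logSpiral x w θ L) t‖ = √(θ ^ 2 + L ^ 2) * ‖logSpiral x w θ L t‖ := by
  have hsq : (L * cos (t * θ) - θ * sin (t * θ)) ^ 2 + (L * sin (t * θ) + θ * cos (t * θ)) ^ 2 =
      θ ^ 2 + L ^ 2 := by
    linear_combination (θ ^ 2 + L ^ 2) * sin_sq_add_cos_sq (t * θ)
  rw [(hasDerivAt_logSpiral x w θ L t).deriv, norm_smul, norm_of_nonneg (exp_nonneg _),
    norm_smul_add_smul_of_inner_eq_zero hw hxw, hsq, norm_logSpiral hw hxw]
  ring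

end InnerProductSpace

section EuclideanSpace

open Real InnerProductGeometry

variable {n : ℕ}

lemma bdist_nonneg (G : Set (EuclideanSpace ℝ (Fin n))) (x : EuclideanSpace ℝ (Fin n)) :
    0 ≤ bdist G x :=
  infDist_nonneg

lemma qhLength_nonneg (G : Set (EuclideanSpace ℝ (Fin n))) (γ : ℝ → EuclideanSpace ℝ (Fin n)) :
    0 ≤ qhLength G γ :=
  intervalIntegral.integral_nonneg zero_le_one
    fun t _ ↦ div_nonneg (norm_nonneg _) (bdist_nonneg G (γ t))

lemma qhDist_le_qhLength {G : Set (EuclideanSpace ℝ (Fin n))}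
    {γ : ℝ → EuclideanSpace ℝ (Fin n)} (hγG : ∀ t ∈ Icc (0 : ℝ) 1, γ t ∈ G)
    (hγ : ContDiffOn ℝ 1 γ (Icc 0 1)) : qhDist G (γ 0) (γ 1) ≤ qhLength G γ := by
  refine ciInf_le (ι := {δ : ℝ → EuclideanSpace ℝ (Fin n) // δ 0 = γ 0 ∧ δ 1 = γ 1 ∧
    (∀ t ∈ Icc (0 : ℝ) 1, δ t ∈ G) ∧ ContDiffOn ℝ 1 δ (Icc 0 1)}) (f := fun δ ↦ qhLength G δ.1)
    ⟨0, ?_⟩ ⟨γ, rfl, rfl, hγG, hγ⟩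
  rintro _ ⟨δ, rfl⟩
  exact qhLength_nonneg G δ.1

lemma jDist_nonneg (G : Set (EuclideanSpace ℝ (Fin n))) (x y : EuclideanSpace ℝ (Fin n)) :
    0 ≤ jDist G x y := by
  have hmin : 0 ≤ min (bdist G x) (bdist G y) := le_min (bdist_nonneg G x) (bdist_nonneg G y)
  exact log_nonneg (le_add_of_nonneg_right (by positivity))

lemma bdist_compl_singleton_zero (x : EuclideanSpace ℝ (Fin n)) : bdist {0}ᶜ x = ‖x‖ := by
  cases subsingleton_or_nontrivial (EuclideanSpace ℝ (Fin n))
  · have hG : ({0}ᶜ : Set (EuclideanSpace ℝ (Fin n))) = ∅ :=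
      compl_empty_iff.2 (Subsingleton.eq_univ_of_nonempty (singleton_nonempty 0))
    rw [bdist, hG, frontier_empty, infDist_empty, Subsingleton.elim x 0, norm_zero]
  · have := Module.punctured_nhds_neBot ℝ (EuclideanSpace ℝ (Fin n)) 0
    rw [bdist, frontier_compl, isClosed_singleton.frontier_eq, interior_singleton, sdiff_empty,
      infDist_singleton, dist_zero_right]

lemma jDist_compl_singleton_zero (x y : EuclideanSpace ℝ (Fin n)) :
    jDist {0}ᶜ x y = log (1 + dist x y / min ‖x‖ ‖y‖) := by
  rw [jDist, bdist_compl_singleton_zero, bdist_compl_singleton_zero]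

lemma qhLength_logSpiral {x w : EuclideanSpace ℝ (Fin n)} (hx : x ≠ 0) (hw : ‖w‖ = ‖x‖)
    (hxw : inner ℝ x w = 0) (θ L : ℝ) :
    qhLength {0}ᶜ (logSpiral x w θ L) = √(θ ^ 2 + L ^ 2) := by
  have hdensity (t : ℝ) : ‖deriv (logSpiral x w θ L) t‖ / bdist {0}ᶜ (logSpiral x w θ L t) =
      √(θ ^ 2 + L ^ 2) := by
    have hpos : 0 < ‖logSpiral x w θ L t‖ := by
      rw [norm_logSpiral hw hxw]
      positivity
    rw [bdist_compl_singleton_zero, norm_deriv_logSpiral hw hxw, mul_div_cancel_right₀ _ hpos.ne']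
  simp only [qhLength, hdensity, intervalIntegral.integral_const, sub_zero, one_smul]

lemma qhDist_compl_singleton_zero_le (hn : 2 ≤ n) {x y : EuclideanSpace ℝ (Fin n)} (hx : x ≠ 0)
    (hy : y ≠ 0) : qhDist {0}ᶜ x y ≤ √(angle x y ^ 2 + log (‖y‖ / ‖x‖) ^ 2) := by
  have hrank : 1 < Module.rank ℝ (EuclideanSpace ℝ (Fin n)) := by
    rw [rank_eq_card_basis (EuclideanSpace.basisFun (Fin n) ℝ).toBasis, Fintype.card_fin]
    exact_mod_cast hn
  obtain ⟨w, hw, hxw, hy_eq⟩ := exists_orthogonal_eq_cos_smul_add_sin_smul hrank x y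
  set θ := angle x y
  set L := log (‖y‖ / ‖x‖)
  have hmem (t : ℝ) : logSpiral x w θ L t ∈ ({0}ᶜ : Set (EuclideanSpace ℝ (Fin n))) := by
    rw [mem_compl_singleton_iff, ← norm_pos_iff, norm_logSpiral hw hxw]
    positivity
  calc qhDist {0}ᶜ x y = qhDist {0}ᶜ (logSpiral x w θ L 0) (logSpiral x w θ L 1) := by
        rw [logSpiral_zero, logSpiral_one_eq hx hy hy_eq]
    _ ≤ qhLength {0}ᶜ (logSpiral x w θ L) :=
        qhDist_le_qhLength (fun t _ ↦ hmem t) (contDiff_logSpiral x w θ L).contDiffOn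
    _ = √(θ ^ 2 + L ^ 2) := qhLength_logSpiral hx hw hxw θ L

lemma mul_qhDist_le_jDist (hn : 2 ≤ n) {x y : EuclideanSpace ℝ (Fin n)} (hx : x ≠ 0) (hy : y ≠ 0)
    {c : ℝ} (hc₀ : 0 ≤ c) (hc₁ : c ≤ 1)
    (hcθ : c * angle x y ≤ log (1 + 2 * sin (angle x y / 2))) :
    c * qhDist {0}ᶜ x y ≤ jDist {0}ᶜ x y := by
  rw [jDist_compl_singleton_zero]
  exact (mul_le_mul_of_nonneg_left (qhDist_compl_singleton_zero_le hn hx hy) hc₀).trans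
    (mul_sqrt_angle_sq_add_log_sq_le hx hy hc₁ hcθ)

end EuclideanSpace

theorem stmt_6 (n : ℕ) (hn : 2 ≤ n) (α : ℝ) (hα : α ∈ Set.Ioc 0 Real.pi)
    (x y : EuclideanSpace ℝ (Fin n)) (hx : x ≠ 0) (hy : y ≠ 0)
    (hang : EuclideanGeometry.angle x 0 y ≤ α) :
    qhDist ({0}ᶜ : Set (EuclideanSpace ℝ (Fin n))) x y ≤
      (α / Real.log (1 + 2 * Real.sin (α / 2))) *
        jDist ({0}ᶜ : Set (EuclideanSpace ℝ (Fin n))) x y ∧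
    (α / Real.log (1 + 2 * Real.sin (α / 2))) *
        jDist ({0}ᶜ : Set (EuclideanSpace ℝ (Fin n))) x y ≤
      (1 + α) * jDist ({0}ᶜ : Set (EuclideanSpace ℝ (Fin n))) x y := by
  obtain ⟨hα₀, hαπ⟩ := hα
  set θ := InnerProductGeometry.angle x y
  have hθα : θ ≤ α := by
    rwa [EuclideanGeometry.angle, vsub_eq_sub, vsub_eq_sub, sub_zero, sub_zero] at hang
  have hα2π : α < 2 * Real.pi := by linarith [Real.pi_pos]
  set l := Real.log (1 + 2 * Real.sin (α / 2))
  have hl_pos : 0 < l := log_one_add_two_mul_sin_half_pos hα₀ hα2π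
  have hl_le : l ≤ α := log_one_add_two_mul_sin_half_le hα₀.le hα2π.le
  have hconcave : l / α * θ ≤ Real.log (1 + 2 * Real.sin (θ / 2)) := by
    have := mul_log_one_add_two_mul_sin_half_le hα₀.le hα2π.le
      (div_nonneg (InnerProductGeometry.angle_nonneg x y) hα₀.le) ((div_le_one hα₀).2 hθα)
    rwa [div_mul_cancel₀ _ hα₀.ne', div_mul_comm] at this
  constructor
  · rw [← inv_div, ← div_eq_inv_mul, le_div_iff₀' (div_pos hl_pos hα₀)]
    exact mul_qhDist_le_jDist hn hx hy (by positivity) ((div_le_one hα₀).2 hl_le) hconcave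
  · refine mul_le_mul_of_nonneg_right ?_ (jDist_nonneg _ x y)
    exact (div_le_iff₀ hl_pos).2 (le_one_add_mul_log_one_add_two_mul_sin_half hα₀.le hαπ)
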